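/- Let G be any group and let W = G ≀ ℤ be the restricted wreath product. Then W is boundedly acyclic. -/

import Mathlib

open scoped BigOperators

/-- A cochain (function into a normed space) is bounded if its norms are uniformly bounded. -/
def IsBddCochain {G : Type*} {E : Type*} [NormedAddCommGroup E] {n : ℕ}
    (f : (Fin n → G) → E) : Prop :=
  ∃ C : ℝ, ∀ g, ‖f g‖ ≤ C

/-- The inhomogeneous coboundary operator of bounded cohomology, for an action `π` of
`G` on `E`:
`(δf)(g₁,…,g_{n+1}) = g₁•f(g₂,…,g_{n+1}) + ∑_{i=1}^{n} (−1)^i f(g₁,…,g_i·g_{i+1},…,g_{n+1})`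
`+ (−1)^{n+1} f(g₁,…,g_n)`. -/
def bddDelta {G : Type*} [Group G] {E : Type*} [NormedAddCommGroup E] [Module ℝ E]
    (π : G → E → E) (n : ℕ) (f : (Fin n → G) → E) : (Fin (n + 1) → G) → E :=
  fun g =>
    π (g 0) (f (fun j => g j.succ)) +
    (∑ i : Fin n, ((-1 : ℝ) ^ ((i : ℕ) + 1)) •
      f (fun j => if (j : ℕ) < (i : ℕ) then g (Fin.castSucc j)
        else if (j : ℕ) = (i : ℕ) then g (Fin.castSucc j) * g j.succ
        else g j.succ)) +
    ((-1 : ℝ) ^ (n + 1)) • f (fun j => g (Fin.castSucc j))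

/-- Vanishing of the bounded cohomology `Hb^n(G,E)` for all `n ≥ 1`, with respect to the
`G`-action `π` on `E`: every bounded cocycle of degree `n ≥ 1` is the coboundary of a
bounded cochain. -/
def HbVanish {G : Type*} [Group G] {E : Type*} [NormedAddCommGroup E] [Module ℝ E]
    (π : G → E → E) : Prop :=
  ∀ (n : ℕ) (f : (Fin (n + 1) → G) → E), IsBddCochain f →
    bddDelta π (n + 1) f = 0 →
    ∃ b : (Fin n → G) → E, IsBddCochain b ∧ bddDelta π n b = f

/-- A group is boundedly acyclic if `Hb^n(G,ℝ) = 0` for all `n ≥ 1`, where `ℝ` carries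
the trivial `G`-action. -/
def BoundedlyAcyclic (G : Type*) [Group G] : Prop :=
  HbVanish (G := G) (E := ℝ) (fun _ v => v)

/-- The restricted product of copies of `G` indexed by `ι`: finitely supported
functions `ι → G` under pointwise multiplication. -/
def finSupp (ι : Type*) (G : Type*) [Group G] : Subgroup (ι → G) where
  carrier := {f | (Function.mulSupport f).Finite}
  mul_mem' := by
    intro a b ha hb
    exact Set.Finite.subset (ha.union hb) (Function.mulSupport_mul a b)
  one_mem' := by simp [Function.mulSupport_one]
  inv_mem' := by
    intro a ha
    simpa [Function.mulSupport_inv] using ha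

/-- The shift action of `ℤ` (written multiplicatively) on the restricted product
`⊕_ℤ G`: `(k • f) n = f (n - k)`. -/
def shiftHom (G : Type*) [Group G] :
    Multiplicative ℤ →* MulAut (finSupp ℤ G) where
  toFun k :=
    { toFun := fun f => ⟨fun n => (f : ℤ → G) (n - k.toAdd),
        Set.Finite.preimage (Set.injOn_of_injective
          (fun a b hab => by omega)) f.2⟩
      invFun := fun f => ⟨fun n => (f : ℤ → G) (n + k.toAdd),
        Set.Finite.preimage (Set.injOn_of_injective
          (fun a b hab => by omega)) f.2⟩
      left_inv := by
        intro f; ext n; simp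
      right_inv := by
        intro f; ext n; simp
      map_mul' := by
        intro f g; rfl }
  map_one' := by
    ext f n; simp
  map_mul' := by
    intro k l
    ext f n
    show (f : ℤ → G) (n - (k.toAdd + l.toAdd)) = (f : ℤ → G) (n - k.toAdd - l.toAdd)
    rw [sub_add_eq_sub_sub]

/-- The restricted wreath product `W = G ≀ ℤ = (⊕_ℤ G) ⋊ ℤ`. -/
abbrev WreathZ (G : Type*) [Group G] :=
  SemidirectProduct (finSupp ℤ G) (Multiplicative ℤ) (shiftHom G)

/-!
Let a finite family `U : Ω → W` be given and average a homogeneous cochain over independent copies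
of `U`, one for each vertex, acting by right multiplication. This averaging is chain homotopic to
the identity with bounds depending only on the degree, and the homotopy preserves invariance. If the
average at vertices `w₁, …, wₙ ∈ S` hardly depends on these vertices, then every cocycle is, on
tuples from `S` and up to a small error, a constant plus a coboundary of controlled norm, and
compactness removes the error.

In `G ≀ ℤ` take for `U` a uniform displacement in `[0, N]`, followed by independent lamps in a long
window whose law is almost stationary under left multiplication by the lamp values occurring in `S`.
Invariance and the almost invariant displacements allow us to move the lamps of `w₁, …, wₙ` to any
one of `K + 1` disjoint blocks. Multiplying the lamps of a block on the left by `b` amounts to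
prescribing the first increments of the random walks there, and by a second moment estimate a
prescription on a uniformly random one of many disjoint blocks is invisible to a bounded function.
-/

universe u

noncomputable section

section Homogeneous

variable {X : Type*}

/-- The simplicial coboundary `(df)(x₀,…,xₙ) = ∑ᵢ (-1)ⁱ f(x₀,…,x̂ᵢ,…,xₙ)`.
Homogeneous cochains are indexed by the number of arguments, which is one more than the degree. -/
def homDelta (n : ℕ) : ((Fin n → X) → ℝ) →ₗ[ℝ] ((Fin (n + 1) → X) → ℝ) :=
  ∑ i : Fin (n + 1), (-1 : ℝ) ^ (i : ℕ) • LinearMap.funLeft ℝ ℝ (· ∘ i.succAbove)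

/-- The contraction `(x₁,…,xₙ) ↦ f(c,x₁,…,xₙ)` of the simplicial complex
by the cone with apex `c`. -/
def coneAt (n : ℕ) (c : X) : ((Fin (n + 1) → X) → ℝ) →ₗ[ℝ] ((Fin n → X) → ℝ) :=
  LinearMap.funLeft ℝ ℝ fun x => (Fin.cons c x : Fin (n + 1) → X)

theorem homDelta_apply (n : ℕ) (f : (Fin n → X) → ℝ) (x : Fin (n + 1) → X) :
    homDelta n f x = ∑ i : Fin (n + 1), (-1 : ℝ) ^ (i : ℕ) * f (x ∘ i.succAbove) := by
  simp [homDelta, LinearMap.funLeft_apply]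

theorem coneAt_apply (n : ℕ) (c : X) (f : (Fin (n + 1) → X) → ℝ) (x : Fin n → X) :
    coneAt n c f x = f (Fin.cons c x) := rfl

theorem coneAt_homDelta (n : ℕ) (c : X) (f : (Fin (n + 1) → X) → ℝ) :
    coneAt (n + 1) c (homDelta (n + 1) f) = f - homDelta n (coneAt n c f) := by
  ext x
  have cons_comp_succAbove (i : Fin (n + 1)) :
      (Fin.cons c x : Fin (n + 2) → X) ∘ i.succ.succAbove = Fin.cons c (x ∘ i.succAbove) := by
    funext j
    cases j using Fin.cases <;> simp
  have cons_comp_succ : (Fin.cons c x : Fin (n + 2) → X) ∘ (0 : Fin (n + 2)).succAbove = x := by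
    funext j
    simp
  simp only [coneAt_apply, homDelta_apply, Pi.sub_apply]
  rw [Fin.sum_univ_succ, cons_comp_succ]
  simp [cons_comp_succAbove, pow_succ, sub_eq_add_neg]

theorem ext_coneAt {n : ℕ} {f g : (Fin (n + 1) → X) → ℝ}
    (h : ∀ c, coneAt n c f = coneAt n c g) : f = g := by
  ext x
  simpa only [coneAt_apply, Fin.cons_self_tail] using congrFun (h (x 0)) (Fin.tail x)

theorem homDelta_homDelta (n : ℕ) (f : (Fin n → X) → ℝ) : homDelta (n + 1) (homDelta n f) = 0 := by
  induction n with
  | zero =>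
    ext x
    simp [homDelta_apply, Fin.sum_univ_succ, Subsingleton.elim _ (Fin.elim0 : Fin 0 → X)]
  | succ n ih =>
    refine ext_coneAt fun c => ?_
    rw [coneAt_homDelta, coneAt_homDelta, map_sub, ih, map_zero, sub_zero, sub_self]

theorem homDelta_const (n : ℕ) (c : ℝ) :
    homDelta (X := X) n (fun _ => c) = fun _ => if Even n then c else 0 := by
  ext x
  rw [homDelta_apply, ← Finset.sum_mul, Fin.sum_univ_eq_sum_range (fun i => (-1 : ℝ) ^ i),
    neg_one_geom_sum]
  by_cases h : Even n <;> simp [h, Nat.even_add_one]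

theorem homDelta_comp_map (n : ℕ) (s : X → X) (f : (Fin n → X) → ℝ) :
    homDelta n (fun x => f (s ∘ x)) = fun x => homDelta n f (s ∘ x) := by
  ext x
  simp only [homDelta_apply, Function.comp_assoc]

theorem abs_homDelta_le (n : ℕ) {f : (Fin n → X) → ℝ} {C : ℝ} (hf : ∀ x, |f x| ≤ C)
    (x : Fin (n + 1) → X) : |homDelta n f x| ≤ (n + 1) * C := by
  rw [homDelta_apply]
  calc |∑ i : Fin (n + 1), (-1 : ℝ) ^ (i : ℕ) * f (x ∘ i.succAbove)|
      ≤ ∑ i : Fin (n + 1), |(-1 : ℝ) ^ (i : ℕ) * f (x ∘ i.succAbove)| :=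
        Finset.abs_sum_le_sum_abs _ _
    _ ≤ ∑ _i : Fin (n + 1), C := by
        gcongr with i
        simpa [abs_mul] using hf _
    _ = (n + 1) * C := by simp

end Homogeneous

section Expectation

variable {Ω Ω' : Type*} [Fintype Ω] [Fintype Ω']

theorem abs_expect_le_of_forall_abs_le [Nonempty Ω] {f : Ω → ℝ} {C : ℝ} (hf : ∀ ω, |f ω| ≤ C) :
    |𝔼 ω, f ω| ≤ C :=
  (Finset.abs_expect_le _ _).trans (Finset.expect_le Finset.univ_nonempty fun ω _ => hf ω)

theorem abs_expect_sub_expect_le [Nonempty Ω] {f g : Ω → ℝ} {C : ℝ}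
    (h : ∀ ω, |f ω - g ω| ≤ C) : |𝔼 ω, f ω - 𝔼 ω, g ω| ≤ C := by
  rw [← Finset.expect_sub_distrib]
  exact abs_expect_le_of_forall_abs_le h

theorem expect_prod (f : Ω × Ω' → ℝ) : 𝔼 p, f p = 𝔼 ω, 𝔼 ω', f (ω, ω') := by
  rw [← Finset.univ_product_univ, Finset.expect_product]

theorem expect_comp_succAbove [Nonempty Ω] {n : ℕ} (i : Fin (n + 1)) (f : (Fin n → Ω) → ℝ) :
    𝔼 ω : Fin (n + 1) → Ω, f (ω ∘ i.succAbove) = 𝔼 ω, f ω := by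
  have insertNth_comp_succAbove (p : Ω × (Fin n → Ω)) :
      f p.2 = f (Fin.insertNthEquiv (fun _ => Ω) i p ∘ i.succAbove) := by
    congr 1
    funext j
    simp
  rw [← Fintype.expect_equiv (Fin.insertNthEquiv (fun _ => Ω) i) _ _ insertNth_comp_succAbove,
    expect_prod]
  exact Fintype.expect_const (𝔼 ω, f ω)

end Expectation

section Homotopy

variable {X Ω : Type*} [Fintype Ω]

/-- The average of a cochain over independent uniformly random maps `T ω : X → X` applied to the
vertices. -/
def randomPullback (T : Ω → X → X) (n : ℕ) : ((Fin n → X) → ℝ) →ₗ[ℝ] ((Fin n → X) → ℝ) where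
  toFun f x := 𝔼 ω : Fin n → Ω, f fun i => T (ω i) (x i)
  map_add' f g := by
    ext x
    exact Finset.expect_add_distrib _ _ _
  map_smul' c f := by
    ext x
    exact (Finset.mul_expect _ _ _).symm

theorem randomPullback_apply (T : Ω → X → X) (n : ℕ) (f : (Fin n → X) → ℝ) (x : Fin n → X) :
    randomPullback T n f x = 𝔼 ω : Fin n → Ω, f fun i => T (ω i) (x i) := rfl

/-- A chain homotopy from the identity to `randomPullback T`. It is built by the method of acyclic
models: the recursion solves the homotopy equation at `x` with the cone at the vertex `x 0`. -/
def randomHomotopy (T : Ω → X → X) :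
    (n : ℕ) → (((Fin (n + 1) → X) → ℝ) →ₗ[ℝ] ((Fin n → X) → ℝ))
  | 0 => 0
  | n + 1 =>
    LinearMap.pi fun x => LinearMap.proj x ∘ₗ
      (randomPullback T (n + 1) - .id - homDelta n ∘ₗ randomHomotopy T n) ∘ₗ coneAt (n + 1) (x 0)

theorem randomHomotopy_zero (T : Ω → X → X) (f : (Fin 1 → X) → ℝ) : randomHomotopy T 0 f = 0 := rfl

theorem randomHomotopy_succ_apply (T : Ω → X → X) (n : ℕ) (f : (Fin (n + 2) → X) → ℝ)
    (x : Fin (n + 1) → X) :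
    randomHomotopy T (n + 1) f x =
      randomPullback T (n + 1) (coneAt (n + 1) (x 0) f) x - coneAt (n + 1) (x 0) f x
        - homDelta n (randomHomotopy T n (coneAt (n + 1) (x 0) f)) x := rfl

theorem homDelta_randomPullback [Nonempty Ω] (T : Ω → X → X) (n : ℕ) (f : (Fin n → X) → ℝ) :
    homDelta n (randomPullback T n f) = randomPullback T (n + 1) (homDelta n f) := by
  ext x
  simp only [homDelta_apply, randomPullback_apply]
  rw [Finset.expect_sum_comm]
  refine Finset.sum_congr rfl fun i _ => ?_
  rw [← Finset.mul_expect]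
  congr 1
  exact (expect_comp_succAbove i fun ω => f fun j => T (ω j) (x (i.succAbove j))).symm

theorem randomPullback_zero (T : Ω → X → X) (f : (Fin 0 → X) → ℝ) : randomPullback T 0 f = f := by
  ext x
  rw [randomPullback_apply]
  simp [Subsingleton.elim _ x]

theorem homDelta_randomHomotopy_add [Nonempty Ω] (T : Ω → X → X) (n : ℕ)
    (f : (Fin (n + 1) → X) → ℝ) :
    homDelta n (randomHomotopy T n f) + randomHomotopy T (n + 1) (homDelta (n + 1) f)
      = randomPullback T (n + 1) f - f := by
  induction n with
  | zero =>
    ext x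
    simp only [Pi.add_apply, Pi.sub_apply, randomHomotopy_succ_apply, coneAt_homDelta, map_sub,
      ← homDelta_randomPullback, randomPullback_zero, randomHomotopy_zero, map_zero,
      Pi.zero_apply]
    ring
  | succ n ih =>
    ext x
    have ih' := eq_sub_of_add_eq' (ih (coneAt (n + 1) (x 0) f))
    rw [Pi.add_apply, randomHomotopy_succ_apply T (n + 1), coneAt_homDelta,
      map_sub (randomHomotopy T (n + 1)), ih']
    simp only [map_sub, Pi.sub_apply, homDelta_homDelta, ← homDelta_randomPullback, Pi.zero_apply]
    ring

theorem randomPullback_comp_map {T : Ω → X → X} {s : X → X}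
    (hs : ∀ ω, Function.Commute (T ω) s) (n : ℕ) (f : (Fin n → X) → ℝ) :
    randomPullback T n (fun x => f (s ∘ x)) = fun x => randomPullback T n f (s ∘ x) := by
  ext x
  simp only [randomPullback_apply, Function.comp_apply, fun ω y => (hs ω).eq y]
  rfl

theorem randomHomotopy_comp_map {T : Ω → X → X} {s : X → X}
    (hs : ∀ ω, Function.Commute (T ω) s) (n : ℕ) (f : (Fin (n + 1) → X) → ℝ) :
    randomHomotopy T n (fun x => f (s ∘ x)) = fun x => randomHomotopy T n f (s ∘ x) := by
  induction n with
  | zero => rfl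
  | succ n ih =>
    ext x
    have coneAt_comp : coneAt (n + 1) (x 0) (fun y => f (s ∘ y)) =
        fun y => coneAt (n + 1) (s (x 0)) f (s ∘ y) := by
      ext y
      simp only [coneAt_apply, Fin.comp_cons]
    simp only [randomHomotopy_succ_apply, coneAt_comp, ih, randomPullback_comp_map hs,
      homDelta_comp_map, Function.comp_apply]

theorem abs_randomPullback_le [Nonempty Ω] (T : Ω → X → X) (n : ℕ) {f : (Fin n → X) → ℝ} {C : ℝ}
    (hf : ∀ x, |f x| ≤ C) (x : Fin n → X) : |randomPullback T n f x| ≤ C :=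
  abs_expect_le_of_forall_abs_le fun _ => hf _

/-- A bound for the operator norm of `randomHomotopy T n` which does not depend on `T`. -/
def homotopyBound : ℕ → ℝ
  | 0 => 0
  | n + 1 => 2 + (n + 1) * homotopyBound n

theorem abs_randomHomotopy_le [Nonempty Ω] (T : Ω → X → X) (n : ℕ) {f : (Fin (n + 1) → X) → ℝ}
    {C : ℝ} (hf : ∀ x, |f x| ≤ C) (x : Fin n → X) :
    |randomHomotopy T n f x| ≤ homotopyBound n * C := by
  induction n with
  | zero => simp [randomHomotopy_zero, homotopyBound]
  | succ n ih =>
    have hcone (y : Fin (n + 1) → X) : |coneAt (n + 1) (x 0) f y| ≤ C := hf _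
    rw [randomHomotopy_succ_apply]
    calc |_| ≤ C + C + (n + 1) * (homotopyBound n * C) := by
          refine (abs_sub _ _).trans (add_le_add ((abs_sub _ _).trans (add_le_add ?_ (hcone x))) ?_)
          · exact abs_randomPullback_le T _ hcone x
          · exact abs_homDelta_le n (ih hcone) x
      _ = homotopyBound (n + 1) * C := by
          simp only [homotopyBound]
          ring

end Homotopy

section Bar

variable {W : Type u} [Group W]

/-- The passage from homogeneous to inhomogeneous coordinates: `(w₀,…,wₙ) ↦ (wⱼ⁻¹ wⱼ₊₁)ⱼ`. -/
def consecutiveQuotients {n : ℕ} (w : Fin (n + 1) → W) (j : Fin n) : W :=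
  (w j.castSucc)⁻¹ * w j.succ

theorem consecutiveQuotients_smul {n : ℕ} (g : W) (w : Fin (n + 1) → W) :
    consecutiveQuotients (g • w) = consecutiveQuotients w := by
  funext j
  simp only [consecutiveQuotients, Pi.smul_apply, smul_eq_mul]
  group

theorem consecutiveQuotients_partialProd {n : ℕ} (g : Fin n → W) :
    consecutiveQuotients (Fin.partialProd g) = g :=
  funext (Fin.partialProd_right_inv g)

theorem smul_partialProd_consecutiveQuotients {n : ℕ} (w : Fin (n + 1) → W) :
    w 0 • Fin.partialProd (consecutiveQuotients w) = w :=
  Fin.partialProd_left_inv w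

/-- A homogeneous cochain is invariant if it is unchanged by simultaneous left translation of all
its arguments. -/
def IsTranslationInvariant {n : ℕ} (F : (Fin n → W) → ℝ) : Prop :=
  ∀ (g : W) (w : Fin n → W), F (g • w) = F w

theorem isTranslationInvariant_comp_consecutiveQuotients {n : ℕ} (f : (Fin n → W) → ℝ) :
    IsTranslationInvariant (f ∘ consecutiveQuotients) := fun g w =>
  congrArg f (consecutiveQuotients_smul g w)

theorem IsTranslationInvariant.homDelta {n : ℕ} {F : (Fin n → W) → ℝ}
    (hF : IsTranslationInvariant F) : IsTranslationInvariant (homDelta n F) := fun g w => by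
  have translate_eq : (fun x => F ((g • ·) ∘ x)) = F := funext (hF g)
  exact (congrFun (homDelta_comp_map n (g • ·) F) w).symm.trans (by rw [translate_eq])

theorem IsTranslationInvariant.ext {n : ℕ} {F F' : (Fin (n + 1) → W) → ℝ}
    (hF : IsTranslationInvariant F) (hF' : IsTranslationInvariant F')
    (h : ∀ g, F (Fin.partialProd g) = F' (Fin.partialProd g)) : F = F' := by
  ext w
  rw [← smul_partialProd_consecutiveQuotients w, hF, hF', h]

theorem homDelta_apply_partialProd {n : ℕ} {F : (Fin (n + 1) → W) → ℝ}
    (hF : IsTranslationInvariant F) (g : Fin (n + 1) → W) :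
    homDelta (n + 1) F (Fin.partialProd g) =
      bddDelta (fun _ v => v) n (fun h => F (Fin.partialProd h)) g := by
  have first_face : F (Fin.partialProd g ∘ (0 : Fin (n + 2)).succAbove) =
      F (Fin.partialProd (Fin.tail g)) := by
    rw [← hF (g 0) (Fin.partialProd (Fin.tail g))]
    congr 1
    funext j
    simp [Fin.partialProd_succ']
  have middle_face (i : Fin n) : Fin.partialProd g ∘ i.castSucc.succ.succAbove =
      Fin.partialProd (Fin.contractNth i.castSucc (· * ·) g) :=
    (Fin.partialProd_contractNth g i.castSucc).symm
  have last_face : Fin.partialProd g ∘ (Fin.last (n + 1)).succAbove =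
      Fin.partialProd (Fin.init g) := by
    funext j
    simp [Fin.partialProd_init]
  rw [homDelta_apply, Fin.sum_univ_succ, Fin.sum_univ_castSucc, first_face, Fin.succ_last,
    last_face]
  simp only [middle_face, bddDelta, smul_eq_mul, Fin.val_zero, pow_zero, one_mul, Fin.val_succ,
    Fin.val_castSucc, Fin.val_last, add_assoc]
  rfl

theorem BoundedlyAcyclic.of_homogeneous
    (h : ∀ (n : ℕ) (F : (Fin (n + 2) → W) → ℝ) (C : ℝ), (∀ w, |F w| ≤ C) →
      IsTranslationInvariant F → homDelta (n + 2) F = 0 → ∃ (B : (Fin (n + 1) → W) → ℝ) (C' : ℝ),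
        (∀ w, |B w| ≤ C') ∧ IsTranslationInvariant B ∧ homDelta (n + 1) B = F) :
    BoundedlyAcyclic W := by
  intro n f ⟨C, hC⟩ hf
  have hF : IsTranslationInvariant (f ∘ consecutiveQuotients) :=
    isTranslationInvariant_comp_consecutiveQuotients f
  have restrict_eq : (fun g => (f ∘ consecutiveQuotients) (Fin.partialProd g)) = f := by
    simp only [Function.comp_apply, consecutiveQuotients_partialProd]
  have hF_cocycle : homDelta (n + 2) (f ∘ consecutiveQuotients) = 0 := by
    refine hF.homDelta.ext (fun _ _ => rfl) fun g => ?_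
    rw [homDelta_apply_partialProd hF, restrict_eq, hf]
    rfl
  obtain ⟨B, C', hBC, hB, hBF⟩ := h n (f ∘ consecutiveQuotients) C (fun w => hC _) hF hF_cocycle
  refine ⟨fun g => B (Fin.partialProd g), ⟨C', fun g => hBC _⟩, ?_⟩
  ext g
  rw [← homDelta_apply_partialProd hB, hBF]
  exact congrFun restrict_eq g

end Bar

section Criterion

variable {W : Type u} [Group W]

theorem isClosed_setOf_isTranslationInvariant (n : ℕ) :
    IsClosed {F : (Fin n → W) → ℝ | IsTranslationInvariant F} := by
  simp only [IsTranslationInvariant, Set.ofPred_forall]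
  exact isClosed_iInter fun g => isClosed_iInter fun w =>
    isClosed_eq (continuous_apply _) (continuous_apply _)

theorem continuous_homDelta {X : Type*} (n : ℕ) : Continuous (homDelta (X := X) n) := by
  refine continuous_pi fun x => ?_
  simp only [homDelta_apply]
  fun_prop

theorem exists_add_homDelta_eq_const_of_approx {n : ℕ} (F : (Fin (n + 1) → W) → ℝ) (C : ℝ)
    (h : ∀ (S : Finset W) (ε : ℝ), 0 < ε → ∃ (b : (Fin n → W) → ℝ) (e : ℝ), (∀ w, |b w| ≤ C) ∧
      |e| ≤ C ∧ IsTranslationInvariant b ∧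
      ∀ w, (∀ i, w i ∈ S) → |F w + homDelta n b w - e| ≤ ε) :
    ∃ (B : (Fin n → W) → ℝ) (E : ℝ), (∀ w, |B w| ≤ C) ∧ IsTranslationInvariant B ∧
      F + homDelta n B = fun _ => E := by
  classical
  let box : Set (((Fin n → W) → ℝ) × ℝ) := (Set.univ.pi fun _ => Set.Icc (-C) C) ×ˢ Set.Icc (-C) C
  let approx (i : Finset W × {ε : ℝ // 0 < ε}) : Set (((Fin n → W) → ℝ) × ℝ) :=
    {p | IsTranslationInvariant p.1 ∧
      ∀ w, (∀ j, w j ∈ i.1) → |F w + homDelta n p.1 w - p.2| ≤ i.2}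
  have box_compact : IsCompact box :=
    (isCompact_univ_pi fun _ => isCompact_Icc).prod isCompact_Icc
  have approx_closed (i) : IsClosed (approx i) := by
    have homDelta_continuous := continuous_homDelta (X := W) n
    refine ((isClosed_setOf_isTranslationInvariant n).preimage continuous_fst).inter ?_
    change IsClosed {p : ((Fin n → W) → ℝ) × ℝ |
      ∀ w, (∀ j, w j ∈ i.1) → |F w + homDelta n p.1 w - p.2| ≤ i.2}
    simp only [Set.ofPred_forall]
    exact isClosed_iInter fun w => isClosed_iInter fun _ => isClosed_le (by fun_prop) (by fun_prop)
  have approx_directed : Directed (· ⊇ ·) fun i => box ∩ approx i := by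
    rintro ⟨S, ε⟩ ⟨S', ε'⟩
    refine ⟨(S ∪ S', min ε ε'), Set.inter_subset_inter_right _ fun p hp => ⟨hp.1, fun w hw => ?_⟩,
      Set.inter_subset_inter_right _ fun p hp => ⟨hp.1, fun w hw => ?_⟩⟩
    · exact (hp.2 w fun j => Finset.mem_union_left _ (hw j)).trans (min_le_left ε.1 ε'.1)
    · exact (hp.2 w fun j => Finset.mem_union_right _ (hw j)).trans (min_le_right ε.1 ε'.1)
  have approx_nonempty (i) : (box ∩ approx i).Nonempty := by
    obtain ⟨b, e, hb, he, hbi, hbe⟩ := h i.1 i.2 i.2.2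
    exact ⟨(b, e), ⟨fun w _ => abs_le.1 (hb w), abs_le.1 he⟩, hbi, hbe⟩
  obtain ⟨⟨B, E⟩, hBE⟩ := IsCompact.nonempty_iInter_of_directed_nonempty_isCompact_isClosed _
    approx_directed approx_nonempty (fun i => box_compact.inter_right (approx_closed i))
    fun i => box_compact.isClosed.inter (approx_closed i)
  rw [Set.mem_iInter] at hBE
  obtain ⟨⟨hB, -⟩, hBi, -⟩ := hBE (∅, ⟨1, one_pos⟩)
  refine ⟨B, E, fun w => abs_le.2 (hB w trivial), hBi, funext fun w => ?_⟩
  refine eq_of_abs_sub_nonpos (le_of_forall_pos_le_add fun ε hε => ?_)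
  rw [zero_add]
  exact (hBE (Finset.univ.image w, ⟨ε, hε⟩)).2.2 w fun i => Finset.mem_image_of_mem w (by simp)

/-- The uniform law of some family `U : Ω → W` almost forgets translations: averaging an invariant
bounded `f` over independent copies of `U` placed at the vertices `w₁,…,wₙ ∈ S` gives almost the
same value as with all vertices at `1`. This is the input which makes cocycles of `W` approximate
coboundaries; `Ω` is required to be finite so that only finite averages occur. -/
def HasMixingTranslates (W : Type u) [Group W] : Prop :=
  ∀ (n : ℕ) (S : Finset W) (C ε : ℝ), 0 < ε →
    ∃ (Ω : Type u) (_ : Fintype Ω) (_ : Nonempty Ω) (U : Ω → W),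
      ∀ f : (Fin n → W) → ℝ, (∀ w, |f w| ≤ C) → IsTranslationInvariant f →
        ∀ w, (∀ i, w i ∈ S) →
          |randomPullback (fun ω x => x * U ω) n f w
            - randomPullback (fun ω x => x * U ω) n f 1| ≤ ε

theorem IsTranslationInvariant.randomHomotopy {Ω : Type*} [Fintype Ω] (U : Ω → W) {n : ℕ}
    {F : (Fin (n + 1) → W) → ℝ} (hF : IsTranslationInvariant F) :
    IsTranslationInvariant (randomHomotopy (fun ω x => x * U ω) n F) := fun g w => by
  have translate_eq : (fun x => F ((g • ·) ∘ x)) = F := funext (hF g)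
  have translate_commute (ω : Ω) : Function.Commute (· * U ω) (g • ·) := fun x => mul_assoc g x _
  exact (congrFun (randomHomotopy_comp_map translate_commute n F) w).symm.trans
    (by rw [translate_eq])

theorem HasMixingTranslates.exists_add_homDelta_eq_const (hW : HasMixingTranslates W) {n : ℕ}
    {F : (Fin (n + 1) → W) → ℝ} {C : ℝ} (hFC : ∀ w, |F w| ≤ C) (hF : IsTranslationInvariant F)
    (hF_cocycle : homDelta (n + 1) F = 0) :
    ∃ (B : (Fin n → W) → ℝ) (C' E : ℝ), (∀ w, |B w| ≤ C') ∧ IsTranslationInvariant B ∧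
      F + homDelta n B = fun _ => E := by
  let C' := max C (homotopyBound n * C)
  obtain ⟨B, E, h⟩ := exists_add_homDelta_eq_const_of_approx F C' fun S ε hε => by
    obtain ⟨Ω, _, _, U, hU⟩ := hW (n + 1) S C ε hε
    refine ⟨randomHomotopy (fun ω x => x * U ω) n F,
      randomPullback (fun ω x => x * U ω) (n + 1) F 1,
      fun w => (abs_randomHomotopy_le _ _ hFC w).trans (le_max_right _ _),
      (abs_randomPullback_le _ _ hFC 1).trans (le_max_left _ _), hF.randomHomotopy U,
      fun w hw => ?_⟩
    have homotopy := homDelta_randomHomotopy_add (fun ω x => x * U ω) n F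
    rw [hF_cocycle, map_zero, add_zero] at homotopy
    rw [homotopy, Pi.sub_apply, add_sub_cancel]
    exact hU F hFC hF w hw
  exact ⟨B, C', E, h⟩

theorem HasMixingTranslates.boundedlyAcyclic (hW : HasMixingTranslates W) :
    BoundedlyAcyclic W := by
  refine BoundedlyAcyclic.of_homogeneous fun n F C hFC hF hF_cocycle => ?_
  obtain ⟨B, C', E, hBC, hB, hFB⟩ := hW.exists_add_homDelta_eq_const hFC hF hF_cocycle
  have const_eq_homDelta : (fun _ : Fin (n + 2) → W => E) = homDelta (n + 1) fun _ => E := by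
    rw [homDelta_const]
    split_ifs with parity
    · rfl
    · have h := congrFun (congrArg (homDelta (n + 2)) hFB) 1
      rw [map_add, hF_cocycle, homDelta_homDelta, zero_add, homDelta_const,
        if_pos (Nat.even_add_one.2 parity)] at h
      exact funext fun _ => h.symm
  refine ⟨(fun _ => E) - B, |E| + C', fun w => ?_, fun g w => congrArg (E - ·) (hB g w), ?_⟩
  · exact (abs_sub _ _).trans (add_le_add le_rfl (hBC w))
  · rw [map_sub, ← const_eq_homDelta, ← hFB, add_sub_cancel_right]

end Criterion

section Averages

variable {P Λ Z κ Ω : Type*} [Fintype P] [DecidableEq P] [Fintype Λ] [Nonempty Λ]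
  [Fintype κ] [Nonempty κ] [Fintype Ω] [Nonempty Ω]

theorem expect_expect_update (p : P) (f : (P → Λ) → ℝ) :
    𝔼 ω, 𝔼 l, f (Function.update ω p l) = 𝔼 ω, f ω := by
  let swap : (P → Λ) × Λ → (P → Λ) × Λ := fun x => (Function.update x.1 p x.2, x.1 p)
  have swap_involutive : Function.Involutive swap := fun x => by simp [swap]
  calc 𝔼 ω, 𝔼 l, f (Function.update ω p l) = 𝔼 x, f (swap x).1 :=
        (expect_prod fun x : (P → Λ) × Λ => f (swap x).1).symm
    _ = 𝔼 x : (P → Λ) × Λ, f x.1 :=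
        Fintype.expect_equiv swap_involutive.toPerm _ _ fun _ => rfl
    _ = 𝔼 ω, f ω := by
        rw [expect_prod]
        simp only [Fintype.expect_const]

theorem expect_pi_prod {A L : Type*} [Fintype A] [Fintype L] (f : (P → A × L) → ℝ) :
    𝔼 x, f x = 𝔼 l : P → L, 𝔼 a : P → A, f fun p => (a p, l p) := by
  rw [Finset.expect_comm, ← expect_prod fun x : (P → A) × (P → L) => f fun p => (x.1 p, x.2 p)]
  exact Fintype.expect_equiv (Equiv.arrowProdEquivProdArrow P (fun _ => A) fun _ => L) _ _
    fun _ => rfl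

theorem abs_expect_sub_expect_le_of_eq_off {C δ : ℝ} (T : Finset P) {X Y : P → Λ → Z}
    (hXY : ∀ p ∉ T, X p = Y p)
    (h : ∀ p ∈ T, ∀ g : Z → ℝ, (∀ z, |g z| ≤ C) → |𝔼 l, g (X p l) - 𝔼 l, g (Y p l)| ≤ δ)
    {φ : (P → Z) → ℝ} (hφ : ∀ z, |φ z| ≤ C) :
    |𝔼 ω : P → Λ, φ (fun p => X p (ω p)) - 𝔼 ω : P → Λ, φ (fun p => Y p (ω p))|
      ≤ T.card * δ := by
  induction T using Finset.induction_on generalizing X with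
  | empty =>
    obtain rfl : X = Y := funext fun p => hXY p (Finset.notMem_empty p)
    simp
  | insert p T hp ih =>
    let X' := Function.update X p (Y p)
    have replace_at (V : Λ → Z) (ω : P → Λ) (l : Λ) :
        (fun q => Function.update X p V q (Function.update ω p l q)) =
          Function.update (fun q => X q (ω q)) p (V l) := by
      funext q
      by_cases hq : q = p
      · subst hq
        simp
      · simp [hq]
    have replace_one : |𝔼 ω : P → Λ, φ (fun q => X q (ω q)) -
        𝔼 ω : P → Λ, φ (fun q => X' q (ω q))| ≤ δ := by
      rw [← expect_expect_update p, ← expect_expect_update p fun ω => φ fun q => X' q (ω q)]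
      refine abs_expect_sub_expect_le fun ω => ?_
      have replace_self := replace_at (X p) ω
      rw [Function.update_eq_self] at replace_self
      simp only [X', replace_at, replace_self]
      exact h p (Finset.mem_insert_self p T) _ fun z => hφ _
    have replace_rest : |𝔼 ω : P → Λ, φ (fun q => X' q (ω q)) -
        𝔼 ω : P → Λ, φ (fun q => Y q (ω q))| ≤ T.card * δ := by
      refine ih (fun q hq => ?_) fun q hq => ?_
      · by_cases hqp : q = p
        · simp [X', hqp]
        · simpa [X', hqp] using hXY q (by simp [hqp, hq])
      · have unchanged : X' q = X q := Function.update_of_ne (ne_of_mem_of_not_mem hq hp) _ _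
        rw [unchanged]
        exact h q (Finset.mem_insert_of_mem hq)
    refine (abs_sub_le _ _ _).trans ((add_le_add replace_one replace_rest).trans_eq ?_)
    rw [Finset.card_insert_of_notMem hp, Nat.cast_succ]
    ring

theorem expect_sq_expect_sub_one_le {D : κ → Ω → ℝ} {c : ℝ} (hD : ∀ k, 𝔼 ω, D k ω = 1)
    (hD_mul : ∀ k l, k ≠ l → 𝔼 ω, D k ω * D l ω = 1) (hD_sq : ∀ k, 𝔼 ω, D k ω * D k ω ≤ c) :
    𝔼 ω, (𝔼 k, D k ω - 1) ^ 2 ≤ c / Fintype.card κ := by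
  classical
  have covariance (k l : κ) :
      𝔼 ω, (D k ω - 1) * (D l ω - 1) = 𝔼 ω, D k ω * D l ω - 1 := by
    simp only [sub_mul, mul_sub, Finset.expect_sub_distrib, mul_one, one_mul, hD,
      Fintype.expect_const]
    ring
  have covariance_le (k l : κ) :
      𝔼 ω, (D k ω - 1) * (D l ω - 1) ≤ if k = l then c else 0 := by
    rw [covariance]
    split_ifs with hkl
    · subst hkl
      linarith [hD_sq k]
    · rw [hD_mul k l hkl, sub_self]
  calc 𝔼 ω, (𝔼 k, D k ω - 1) ^ 2
      = 𝔼 ω, 𝔼 k, 𝔼 l, (D k ω - 1) * (D l ω - 1) := by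
        refine Finset.expect_congr rfl fun ω _ => ?_
        rw [← Finset.expect_mul_expect, Finset.expect_sub_distrib, Fintype.expect_const, sq]
    _ = 𝔼 k, 𝔼 l, 𝔼 ω, (D k ω - 1) * (D l ω - 1) := by
        rw [Finset.expect_comm]
        exact Finset.expect_congr rfl fun k _ => Finset.expect_comm _ _ _
    _ ≤ 𝔼 k : κ, 𝔼 l : κ, if k = l then c else 0 :=
        Finset.expect_le_expect fun k _ => Finset.expect_le_expect fun l _ => covariance_le k l
    _ = c / Fintype.card κ := by
        simp only [Fintype.expect_eq_sum_div_card, Finset.sum_ite_eq, Finset.mem_univ, if_true,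
          Finset.sum_const, Finset.card_univ, nsmul_eq_mul]
        field_simp

theorem abs_expect_expect_mul_sub_expect_le {D : κ → Ω → ℝ} {c C : ℝ} (hD : ∀ k, 𝔼 ω, D k ω = 1)
    (hD_mul : ∀ k l, k ≠ l → 𝔼 ω, D k ω * D l ω = 1) (hD_sq : ∀ k, 𝔼 ω, D k ω * D k ω ≤ c)
    {φ : Ω → ℝ} (hφ : ∀ ω, |φ ω| ≤ C) :
    |𝔼 k, 𝔼 ω, D k ω * φ ω - 𝔼 ω, φ ω| ≤ √(c / Fintype.card κ * C ^ 2) := by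
  have density_eq : 𝔼 k, 𝔼 ω, D k ω * φ ω - 𝔼 ω, φ ω = 𝔼 ω, (𝔼 k, D k ω - 1) * φ ω := by
    simp only [sub_mul, one_mul, Finset.expect_sub_distrib, Finset.expect_mul]
    rw [Finset.expect_comm]
  have expect_sq_le : 𝔼 ω, φ ω ^ 2 ≤ C ^ 2 :=
    Finset.expect_le Finset.univ_nonempty fun ω _ =>
      sq_le_sq' (abs_le.1 (hφ ω)).1 (abs_le.1 (hφ ω)).2
  rw [density_eq]
  refine Real.abs_le_sqrt ((Finset.expect_mul_sq_le_sq_mul_sq _ _ _).trans ?_)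
  have variance_le := expect_sq_expect_sub_one_le hD hD_mul hD_sq
  have variance_nonneg : 0 ≤ 𝔼 ω, (𝔼 k, D k ω - 1) ^ 2 :=
    Finset.expect_nonneg fun ω _ => sq_nonneg _
  exact mul_le_mul variance_le expect_sq_le (Finset.expect_nonneg fun ω _ => sq_nonneg _)
    (variance_nonneg.trans variance_le)

end Averages

section Planting

variable {P A κ : Type*} [Fintype A]

/-- The density, with respect to the uniform law on `P → A`, of a uniformly random configuration
whose restriction to `s` has been overwritten by `y`. -/
def plantingDensity [DecidableEq A] (s : Finset P) (y e : P → A) : ℝ :=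
  ∏ p ∈ s, if e p = y p then (Fintype.card A : ℝ) else 0

theorem plantingDensity_congr [DecidableEq A] {s : Finset P} {y e e' : P → A}
    (h : ∀ p ∈ s, e p = e' p) :
    plantingDensity s y e = plantingDensity s y e' :=
  Finset.prod_congr rfl fun p hp => by rw [h p hp]

theorem plantingDensity_self [DecidableEq A] (s : Finset P) (y : P → A) :
    plantingDensity s y y = Fintype.card A ^ s.card := by
  simp [plantingDensity]

variable [Fintype P] [DecidableEq P] [Nonempty A]

theorem expect_plantingDensity_mul [DecidableEq A] (s : Finset P) (y : P → A) (φ : (P → A) → ℝ) :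
    𝔼 e, plantingDensity s y e * φ e = 𝔼 e, φ (s.piecewise y e) := by
  induction s using Finset.induction_on generalizing φ with
  | empty => simp [plantingDensity]
  | insert p s hp ih =>
    have resample (e : P → A) (a : A) :
        plantingDensity (insert p s) y (Function.update e p a) * φ (Function.update e p a) =
          plantingDensity s y e * if a = y p then Fintype.card A * φ (Function.update e p a)
            else 0 := by
      have density_update : plantingDensity s y (Function.update e p a) = plantingDensity s y e :=
        plantingDensity_congr fun q hq =>
          Function.update_of_ne (ne_of_mem_of_not_mem hq hp) _ _
      rw [plantingDensity, Finset.prod_insert hp, ← plantingDensity, density_update,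
        Function.update_self]
      split_ifs <;> ring
    rw [← expect_expect_update p]
    simp only [resample, ← Finset.mul_expect, Finset.piecewise_insert]
    rw [ih]
    refine Finset.expect_congr rfl fun e _ => ?_
    simp only [Fintype.expect_eq_sum_div_card, Finset.sum_ite_eq', Finset.mem_univ, if_true]
    field_simp

theorem abs_expect_piecewise_sub_expect_le [Fintype κ] [Nonempty κ] {B : κ → Finset P} {q : ℕ}
    (hB : Pairwise fun k l => Disjoint (B k) (B l)) (hq : ∀ k, (B k).card ≤ q) (y : κ → P → A)
    {φ : (P → A) → ℝ} {C : ℝ} (hφ : ∀ e, |φ e| ≤ C) :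
    |𝔼 k, 𝔼 e, φ ((B k).piecewise (y k) e) - 𝔼 e, φ e|
      ≤ √(Fintype.card A ^ q / Fintype.card κ * C ^ 2) := by
  classical
  have expect_density (k) : 𝔼 e, plantingDensity (B k) (y k) e = 1 := by
    simpa using expect_plantingDensity_mul (B k) (y k) fun _ => 1
  simp only [← expect_plantingDensity_mul]
  refine abs_expect_expect_mul_sub_expect_le expect_density (fun k l hkl => ?_) (fun k => ?_) hφ
  · rw [expect_plantingDensity_mul, ← expect_density l]
    exact Finset.expect_congr rfl fun e _ => plantingDensity_congr fun p hp =>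
      Finset.piecewise_eq_of_notMem _ _ _ (Finset.disjoint_right.1 (hB hkl) hp)
  · have density_planted (e : P → A) : plantingDensity (B k) (y k) ((B k).piecewise (y k) e) =
        Fintype.card A ^ (B k).card := by
      rw [← plantingDensity_self]
      exact plantingDensity_congr fun p hp => Finset.piecewise_eq_of_mem _ _ _ hp
    rw [expect_plantingDensity_mul]
    simp only [density_planted, Fintype.expect_const]
    exact pow_le_pow_right₀ (mod_cast Fintype.card_pos) (hq k)

end Planting

section RandomWalk

theorem abs_expect_succ_sub_expect_castSucc_le {N : ℕ} {u : Fin (N + 2) → ℝ} {C : ℝ}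
    (hu : ∀ j, |u j| ≤ C) :
    |𝔼 j : Fin (N + 1), u j.succ - 𝔼 j : Fin (N + 1), u j.castSucc| ≤ 2 * C / (N + 1) := by
  have telescope : ∑ j : Fin (N + 1), u j.succ - ∑ j : Fin (N + 1), u j.castSucc =
      u (Fin.last _) - u 0 := by
    linarith [Fin.sum_univ_succ u, Fin.sum_univ_castSucc u]
  rw [Fintype.expect_eq_sum_div_card, Fintype.expect_eq_sum_div_card, ← sub_div, telescope,
    Fintype.card_fin, Nat.cast_succ, abs_div, abs_of_pos (Nat.cast_add_one_pos N : (0 : ℝ) < N + 1)]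
  gcongr
  exact (abs_sub _ _).trans (by linarith [hu (Fin.last _), hu 0])

theorem abs_expect_add_sub_expect_le (N : ℕ) {g : ℤ → ℝ} {C : ℝ} (hg : ∀ z, |g z| ≤ C) (c : ℤ) :
    |𝔼 j : Fin (N + 1), g (j + c) - 𝔼 j : Fin (N + 1), g j| ≤ |c| * (2 * C / (N + 1)) := by
  have add_natCast {g : ℤ → ℝ} (hg : ∀ z, |g z| ≤ C) (m : ℕ) :
      |𝔼 j : Fin (N + 1), g (j + m) - 𝔼 j : Fin (N + 1), g j| ≤ m * (2 * C / (N + 1)) := by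
    induction m with
    | zero => simp
    | succ m ih =>
      have add_one := abs_expect_succ_sub_expect_castSucc_le (N := N) (u := fun j => g (j + m))
        fun j => hg _
      have succ_add (j : Fin (N + 1)) : ((j.succ : ℕ) : ℤ) + m = j + (m + 1 : ℕ) := by
        push_cast [Fin.val_succ]
        ring
      simp only [succ_add, Fin.val_castSucc] at add_one
      refine (abs_sub_le _ _ _).trans ((add_le_add add_one ih).trans_eq ?_)
      push_cast
      ring
  obtain ⟨m, rfl | rfl⟩ := c.eq_nat_or_neg
  · simpa using add_natCast hg m
  · have := add_natCast (g := fun z => g (z - m)) (fun z => hg _) m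
    rw [abs_sub_comm] at this
    simpa [sub_eq_add_neg] using this

theorem abs_expect_pi_add_sub_expect_le {ι : Type*} [Fintype ι] [DecidableEq ι] (N : ℕ)
    {g : (ι → ℤ) → ℝ} {C : ℝ} (hg : ∀ z, |g z| ≤ C) {c : ι → ℤ} {m : ℕ} (hc : ∀ i, |c i| ≤ m) :
    |𝔼 j : ι → Fin (N + 1), g (fun i => j i + c i) - 𝔼 j : ι → Fin (N + 1), g (fun i => j i)|
      ≤ Fintype.card ι * (m * (2 * C / (N + 1))) := by
  refine abs_expect_sub_expect_le_of_eq_off (X := fun i (l : Fin (N + 1)) => (l : ℤ) + c i)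
    (Y := fun _ l => (l : ℤ)) Finset.univ (fun i hi => absurd (Finset.mem_univ i) hi)
    (fun i _ h hh => (abs_expect_add_sub_expect_le N hh (c i)).trans ?_) hg
  have hC : 0 ≤ C := (abs_nonneg _).trans (hg 0)
  gcongr
  exact_mod_cast hc i

variable {G A : Type*} [Group G] [Fintype A] [Nonempty A]

/-- The position at time `x.1` of the walk in `G` whose `i`-th increment is `v (x.2 i)`. For
uniformly random `x` its law is almost invariant under convolution with that of `v`. -/
def walkPosition (v : A → G) {M : ℕ} (x : Fin (M + 1) × (Fin M → A)) : G :=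
  Fin.partialProd (v ∘ x.2) x.1

theorem abs_expect_mul_walkPosition_sub_expect_le (v : A → G) (M : ℕ) {g : G → ℝ} {C : ℝ}
    (hg : ∀ z, |g z| ≤ C) :
    |𝔼 a, 𝔼 x : Fin (M + 1) × (Fin M → A), g (v a * walkPosition v x)
      - 𝔼 x : Fin (M + 1) × (Fin M → A), g (walkPosition v x)| ≤ 2 * C / (M + 1) := by
  have delay : 𝔼 a, 𝔼 x : Fin (M + 1) × (Fin M → A), g (v a * walkPosition v x) =
      𝔼 w : Fin (M + 1) → A, 𝔼 l : Fin (M + 1), g (Fin.partialProd (v ∘ w) l.succ) := by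
    have partialProd_cons (p : A × (Fin M → A)) (l : Fin (M + 1)) :
        Fin.partialProd (v ∘ Fin.consEquiv (fun _ => A) p) l.succ =
          v p.1 * walkPosition v (l, p.2) := by
      rw [Fin.partialProd_succ']
      rfl
    rw [← Fintype.expect_equiv (Fin.consEquiv fun _ => A) _ _ fun _ => rfl, expect_prod]
    simp only [partialProd_cons]
    refine Finset.expect_congr rfl fun a _ => ?_
    rw [expect_prod, Finset.expect_comm]
  have forget : 𝔼 x : Fin (M + 1) × (Fin M → A), g (walkPosition v x) =
      𝔼 w : Fin (M + 1) → A, 𝔼 l : Fin (M + 1), g (Fin.partialProd (v ∘ w) l.castSucc) := by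
    rw [expect_prod, Finset.expect_comm, ← expect_comp_succAbove (Fin.last M)]
    simp only [walkPosition, Fin.succAbove_last, ← Function.comp_assoc]
    refine Finset.expect_congr rfl fun w _ => Finset.expect_congr rfl fun l _ => ?_
    rw [← Fin.partialProd_init]
    rfl
  rw [delay, forget]
  exact abs_expect_sub_expect_le fun w => abs_expect_succ_sub_expect_castSucc_le fun j => hg _

end RandomWalk

section Absorption

variable {G A L P κ : Type*} [Group G] [Fintype A] [Nonempty A] [Fintype L] [Nonempty L]
  [Fintype P] [DecidableEq P] [Fintype κ] [Nonempty κ]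

theorem abs_expect_absorb_sub_expect_piecewise_le (v : A → G) (Z : L → G) {C δ : ℝ}
    (hZ : ∀ g : G → ℝ, (∀ z, |g z| ≤ C) → |𝔼 a, 𝔼 l, g (v a * Z l) - 𝔼 l, g (Z l)| ≤ δ)
    (B : Finset P) (y : P → A) {φ : (P → G) → ℝ} (hφ : ∀ z, |φ z| ≤ C) :
    |𝔼 x : P → A × L, φ (fun p => (if p ∈ B then v (y p) else 1) * (v (x p).1 * Z (x p).2)) -
      𝔼 l : P → L, 𝔼 a : P → A, φ (fun p => v (B.piecewise y a p) * Z (l p))| ≤ B.card * δ := by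
  have split_coordinates :
      𝔼 x : P → A × L, φ (fun p => v (B.piecewise y (fun q => (x q).1) p) * Z (x p).2) =
        𝔼 l : P → L, 𝔼 a : P → A, φ (fun p => v (B.piecewise y a p) * Z (l p)) := by
    rw [expect_pi_prod]
  rw [← split_coordinates]
  refine abs_expect_sub_expect_le_of_eq_off B
    (X := fun p (x : A × L) => (if p ∈ B then v (y p) else 1) * (v x.1 * Z x.2))
    (Y := fun p x => v (B.piecewise y (fun _ => x.1) p) * Z x.2) (fun p hp => ?_)
    (fun p hp g hg => ?_) hφ
  · funext x
    simp [hp]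
  · have := hZ (fun z => g (v (y p) * z)) fun z => hg _
    simpa [hp, expect_prod] using this

/-- The factor `v (y p)` becomes a prescription of the increment `v (x p).1`, since `v · * Z` has
almost the law of `Z`; on one of many disjoint blocks such a prescription is invisible. -/
theorem abs_expect_expect_absorb_sub_expect_le (v : A → G) (Z : L → G) {C δ : ℝ}
    (hZ : ∀ g : G → ℝ, (∀ z, |g z| ≤ C) → |𝔼 a, 𝔼 l, g (v a * Z l) - 𝔼 l, g (Z l)| ≤ δ)
    {B : κ → Finset P} {q : ℕ} (hB : Pairwise fun k l => Disjoint (B k) (B l))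
    (hq : ∀ k, (B k).card ≤ q) (y : κ → P → A) {φ : (P → G) → ℝ} (hφ : ∀ z, |φ z| ≤ C) :
    |𝔼 k, 𝔼 x : P → A × L,
        φ (fun p => (if p ∈ B k then v (y k p) else 1) * (v (x p).1 * Z (x p).2)) -
      𝔼 x : P → A × L, φ (fun p => v (x p).1 * Z (x p).2)|
      ≤ q * δ + √(Fintype.card A ^ q / Fintype.card κ * C ^ 2) := by
  have hδ : 0 ≤ δ :=
    (abs_nonneg _).trans (hZ 0 fun _ => by simpa using (abs_nonneg _).trans (hφ 1))
  refine (abs_sub_le _ _ _).trans (add_le_add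
    (abs_expect_sub_expect_le fun k =>
      (abs_expect_absorb_sub_expect_piecewise_le v Z hZ (B k) (y k) hφ).trans ?_) ?_)
  · gcongr
    exact hq k
  · rw [expect_pi_prod, Finset.expect_comm]
    exact abs_expect_sub_expect_le fun l =>
      abs_expect_piecewise_sub_expect_le hB hq y (φ := fun a => φ fun p => v (a p) * Z (l p))
        fun a => hφ _

end Absorption

namespace WreathZ

open SemidirectProduct

variable {G : Type u} [Group G]

section Configuration

variable (G) in
/-- The generator of the factor `ℤ` of `G ≀ ℤ`, raised to the power `k`. -/
def translation (k : ℤ) : WreathZ G :=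
  inr (Multiplicative.ofAdd k)

theorem translation_add (k l : ℤ) : translation G (k + l) = translation G k * translation G l :=
  map_mul inr _ _

theorem translation_mul_inl (k : ℤ) (b : finSupp ℤ G) :
    translation G k * inl b = inl (shiftHom G (Multiplicative.ofAdd k) b) * translation G k := by
  rw [translation, inl_aut, map_inv, inv_mul_cancel_right]

theorem inl_left_mul_translation (w : WreathZ G) :
    inl w.left * translation G w.right.toAdd = w :=
  inl_left_mul_inr_right w

theorem shiftHom_ofAdd_apply (k : ℤ) (b : finSupp ℤ G) (z : ℤ) :
    (shiftHom G (Multiplicative.ofAdd k) b).1 z = b.1 (z - k) := rfl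

/-- The extension by `1` of a function on a finite set of integers. -/
def extendByOne {I : Finset ℤ} (u : I → G) : finSupp ℤ G :=
  ⟨fun z => if h : z ∈ I then u ⟨z, h⟩ else 1,
    I.finite_toSet.subset fun _ hz => by_contra fun h => hz (dif_neg h)⟩

theorem extendByOne_apply_mem {I : Finset ℤ} (u : I → G) {z : ℤ} (hz : z ∈ I) :
    (extendByOne u).1 z = u ⟨z, hz⟩ := dif_pos hz

theorem extendByOne_apply_notMem {I : Finset ℤ} (u : I → G) {z : ℤ} (hz : z ∉ I) :
    (extendByOne u).1 z = 1 := dif_neg hz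

variable {ι : Type*} {I : Finset ℤ}

/-- The tuple of elements of `G ≀ ℤ` which move by `j i` and then write the lamps `u (i, ·)` on `I`,
sites being counted from the new position. -/
def configuration (j : ι → ℤ) (u : ι × I → G) (i : ι) : WreathZ G :=
  translation G (j i) * inl (extendByOne fun z => u (i, z))

theorem inl_shiftHom_mul_configuration (b : ι → finSupp ℤ G) (r : ℤ) (j : ι → ℤ) (u : ι × I → G)
    (hb : ∀ i, ∀ z ∉ I, (b i).1 (z - r + j i) = 1) :
    (fun i => inl (shiftHom G (Multiplicative.ofAdd r) (b i))) * configuration j u =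
      configuration j fun p => (b p.1).1 (p.2 - r + j p.1) * u p := by
  funext i
  have shift_sub : shiftHom G (Multiplicative.ofAdd r) (b i) = shiftHom G
      (Multiplicative.ofAdd (j i)) (shiftHom G (Multiplicative.ofAdd (r - j i)) (b i)) :=
    Subtype.ext <| funext fun z => congrArg (b i).1 (by simp only [toAdd_ofAdd]; ring)
  simp only [Pi.mul_apply, configuration]
  rw [shift_sub, ← mul_assoc, ← translation_mul_inl, mul_assoc, ← map_mul]
  congr 2
  ext z
  rw [Subgroup.coe_mul, Pi.mul_apply, shiftHom_ofAdd_apply, ← sub_add]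
  by_cases hz : z ∈ I
  · rw [extendByOne_apply_mem _ hz, extendByOne_apply_mem _ hz]
  · rw [extendByOne_apply_notMem _ hz, extendByOne_apply_notMem _ hz, hb i z hz, mul_one]

theorem translation_smul_mul_configuration (w : ι → WreathZ G) (r : ℤ) (j : ι → ℤ)
    (u : ι × I → G) :
    translation G r • (w * configuration j u) =
      (fun i => inl (shiftHom G (Multiplicative.ofAdd r) (w i).left)) *
        configuration (fun i => j i + (r + (w i).right.toAdd)) u := by
  funext i
  simp only [Pi.smul_apply, Pi.mul_apply, smul_eq_mul, configuration]
  rw [add_comm (j i), translation_add, translation_add]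
  nth_rw 1 [← inl_left_mul_translation (w i)]
  rw [← mul_assoc, ← mul_assoc, ← mul_assoc, translation_mul_inl]
  simp only [mul_assoc]

/-- The random element of `G ≀ ℤ` whose lamps on `I` are independent with the law of `s` and whose
displacement `x.1` is uniform in `[0, N]`. -/
def sample {Λ : Type*} (s : Λ → G) {N : ℕ} (x : Fin (N + 1) × (I → Λ)) : WreathZ G :=
  translation G x.1 * inl (extendByOne fun z => s (x.2 z))

theorem randomPullback_sample {Λ : Type*} [Fintype Λ] (s : Λ → G) (N n : ℕ)
    (f : (Fin n → WreathZ G) → ℝ) (w : Fin n → WreathZ G) :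
    randomPullback (fun (x : Fin (N + 1) × (I → Λ)) y => y * sample s x) n f w =
      𝔼 j : Fin n → Fin (N + 1), 𝔼 x : Fin n × I → Λ,
        f (w * configuration (fun i => j i) (s ∘ x)) := by
  let split : (Fin n → Fin (N + 1) × (I → Λ)) ≃ (Fin n → Fin (N + 1)) × (Fin n × I → Λ) :=
    (Equiv.arrowProdEquivProdArrow _ _ _).trans
      (Equiv.prodCongr (Equiv.refl _) (Equiv.curry _ _ _).symm)
  rw [← expect_prod fun x : (Fin n → Fin (N + 1)) × (Fin n × I → Λ) =>
    f (w * configuration (fun i => x.1 i) (s ∘ x.2))]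
  exact Fintype.expect_equiv split _ _ fun _ => rfl

theorem abs_expect_mul_configuration_sub_le {Λ : Type*} [Fintype Λ] [Nonempty Λ] (s : Λ → G)
    (N : ℕ) {n : ℕ} {f : (Fin n → WreathZ G) → ℝ} {C : ℝ} (hf : ∀ w, |f w| ≤ C)
    (hf_inv : IsTranslationInvariant f) (w : Fin n → WreathZ G) (r : ℤ) {m : ℕ}
    (hm : ∀ i, |r + (w i).right.toAdd| ≤ m) :
    |𝔼 j : Fin n → Fin (N + 1), 𝔼 x : Fin n × I → Λ, f (w * configuration (fun i => j i) (s ∘ x)) -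
      𝔼 j : Fin n → Fin (N + 1), 𝔼 x : Fin n × I → Λ,
        f ((fun i => inl (shiftHom G (Multiplicative.ofAdd r) (w i).left)) *
          configuration (fun i => j i) (s ∘ x))| ≤ n * (m * (2 * C / (N + 1))) := by
  have translate (j : Fin n → Fin (N + 1)) (x : Fin n × I → Λ) :
      f (w * configuration (fun i => j i) (s ∘ x)) =
        f ((fun i => inl (shiftHom G (Multiplicative.ofAdd r) (w i).left)) *
          configuration (fun i => j i + (r + (w i).right.toAdd)) (s ∘ x)) := by
    rw [← hf_inv (translation G r), translation_smul_mul_configuration]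
  simp only [translate]
  simpa only [Fintype.card_fin] using abs_expect_pi_add_sub_expect_le N
    (g := fun j => 𝔼 x : Fin n × I → Λ,
      f ((fun i => inl (shiftHom G (Multiplicative.ofAdd r) (w i).left)) *
        configuration j (s ∘ x)))
    (fun j => abs_expect_le_of_forall_abs_le fun x => hf _) hm

end Configuration

section Blocks

variable {ι : Type*} [Fintype ι] (R : ℕ) (I : Finset ℤ) (j : ι → ℤ)

/-- The sites whose lamps may change when `configuration j` is multiplied on the left by lamp
functions supported in `[-R, R]` and translated by `k (2R+1)`. -/
def block (k : ℤ) : Finset (ι × I) :=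
  {p | (p.2 : ℤ) - k * (2 * R + 1) + j p.1 ∈ Finset.Icc (-R : ℤ) R}

variable {R I j} in
theorem mem_block {k : ℤ} {p : ι × I} :
    p ∈ block R I j k ↔ (p.2 : ℤ) - k * (2 * R + 1) + j p.1 ∈ Finset.Icc (-R : ℤ) R := by
  simp [block]

theorem pairwise_disjoint_block : Pairwise fun k l => Disjoint (block R I j k) (block R I j l) := by
  refine fun k l hkl => Finset.disjoint_left.2 fun p hk hl => hkl ?_
  rw [mem_block, Finset.mem_Icc] at hk hl
  have offset_lt : |(k - l) * (2 * R + 1 : ℤ)| < 2 * R + 1 := by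
    rw [abs_lt]
    constructor <;> linarith [hk.1, hk.2, hl.1, hl.2]
  have offset_eq_zero := Int.eq_zero_of_abs_lt_dvd (dvd_mul_left _ _) offset_lt
  exact sub_eq_zero.1 ((mul_eq_zero.1 offset_eq_zero).resolve_right (by positivity))

theorem card_block_le (k : ℤ) :
    (block R I j k).card ≤ Fintype.card ι * (2 * R + 1) := by
  have card_target : ((Finset.univ : Finset ι) ×ˢ Finset.Icc (-R : ℤ) R).card =
      Fintype.card ι * (2 * R + 1) := by
    rw [Finset.card_product, Finset.card_univ, Int.card_Icc]
    congr 1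
    omega
  rw [← card_target]
  refine Finset.card_le_card_of_injOn (fun p => (p.1, (p.2 : ℤ) - k * (2 * R + 1) + j p.1))
    (fun p hp => by simpa using mem_block.1 hp) ?_
  rintro ⟨i, z⟩ - ⟨i', z'⟩ - h
  obtain ⟨rfl, hz⟩ := Prod.mk.inj h
  have site_eq : (z : ℤ) = z' := by linarith
  rw [Subtype.ext site_eq]

end Blocks

section Mixing

/-- The sites at which multiplication by the blocks `0, …, K` may change lamps, when the
displacements lie in `[0, N]`. -/
def window (K N R : ℕ) : Finset ℤ :=
  Finset.Icc (-(N + R) : ℤ) (K * (2 * R + 1) + R)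

theorem mem_window {K N R : ℕ} (k : Fin (K + 1)) (j : Fin (N + 1)) {z : ℤ}
    (hz : z - (k : ℕ) * (2 * R + 1) + (j : ℕ) ∈ Finset.Icc (-R : ℤ) R) : z ∈ window K N R := by
  have block_le : ((k : ℕ) * (2 * R + 1) : ℤ) ≤ K * (2 * R + 1) := by
    gcongr
    exact_mod_cast k.is_le
  have block_nonneg : (0 : ℤ) ≤ (k : ℕ) * (2 * R + 1) := by positivity
  rw [window, Finset.mem_Icc]
  rw [Finset.mem_Icc] at hz
  omega

/-- The probability space carrying a single random lamp: a first increment in `A`, together with a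
random time and the remaining increments of a walk. -/
abbrev LampSpace (A : Finset G) (M : ℕ) : Type u :=
  A × (Fin (M + 1) × (Fin M → A))

/-- The random lamp: the walk with increments uniform in `A`, stopped at a uniformly random time
between `1` and `M + 1`. -/
def lamp (A : Finset G) {M : ℕ} (x : LampSpace A M) : G :=
  x.1 * walkPosition Subtype.val x.2

theorem abs_expect_expect_inl_mul_configuration_sub_le {ι : Type*} [Fintype ι] [DecidableEq ι]
    (A : Finset G) [Nonempty A] (K M N R : ℕ) {f : (ι → WreathZ G) → ℝ} {C : ℝ}
    (hf : ∀ w, |f w| ≤ C) {b : ι → finSupp ℤ G} (hbA : ∀ i z, (b i).1 z ∈ A)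
    (hbR : ∀ i, ∀ z ∉ Finset.Icc (-R : ℤ) R, (b i).1 z = 1) (j : ι → Fin (N + 1)) :
    |𝔼 k : Fin (K + 1), 𝔼 x : ι × window K N R → LampSpace A M,
        f ((fun i => inl (shiftHom G (Multiplicative.ofAdd ((k : ℕ) * (2 * R + 1) : ℤ)) (b i))) *
          configuration (fun i => j i) (lamp A ∘ x)) -
      𝔼 x : ι × window K N R → LampSpace A M,
        f (configuration (fun i => j i) (lamp A ∘ x))| ≤
      (Fintype.card ι * (2 * R + 1) : ℕ) * (2 * C / (M + 1)) +
        √(A.card ^ (Fintype.card ι * (2 * R + 1)) / (K + 1) * C ^ 2) := by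
  let y (k : Fin (K + 1)) (p : ι × window K N R) : A :=
    ⟨(b p.1).1 (p.2 - (k : ℕ) * (2 * R + 1) + (j p.1 : ℕ)), hbA _ _⟩
  have factor_eq (k : Fin (K + 1)) (p : ι × window K N R) :
      (b p.1).1 (p.2 - (k : ℕ) * (2 * R + 1) + (j p.1 : ℕ)) =
        if p ∈ block R (window K N R) (fun i => j i) (k : ℕ) then ((y k p : A) : G) else 1 := by
    split_ifs with hp
    · rfl
    · exact hbR _ _ fun h => hp (mem_block.2 h)
  have mul_eq (k : Fin (K + 1)) (x : ι × window K N R → LampSpace A M) :=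
    inl_shiftHom_mul_configuration b ((k : ℕ) * (2 * R + 1)) (fun i => (j i : ℕ)) (lamp A ∘ x)
      fun i z hz => hbR i _ (mt (mem_window k (j i)) hz)
  simp only [mul_eq, factor_eq]
  have blocks_disjoint : Pairwise fun k l : Fin (K + 1) =>
      Disjoint (block R (window K N R) (fun i => j i) (k : ℕ))
        (block R (window K N R) (fun i => j i) (l : ℕ)) := fun k l hkl =>
    pairwise_disjoint_block R _ _ (by exact_mod_cast Fin.val_ne_of_ne hkl)
  simpa [lamp, Function.comp_def] using abs_expect_expect_absorb_sub_expect_le Subtype.val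
    (walkPosition Subtype.val) (fun g hg => abs_expect_mul_walkPosition_sub_expect_le _ M hg)
    blocks_disjoint (fun k => card_block_le R _ _ _) y
    (φ := fun u => f (configuration (fun i => j i) u)) fun u => hf _

/-- `w` writes lamps with values in `A` on `[-R, R]` and moves by at most `c`. -/
structure IsControlled (A : Finset G) (R c : ℕ) (w : WreathZ G) : Prop where
  lamp_mem : ∀ z, w.left.1 z ∈ A
  lamp_eq_one : ∀ z ∉ Finset.Icc (-R : ℤ) R, w.left.1 z = 1
  abs_displacement_le : |w.right.toAdd| ≤ c

theorem exists_forall_isControlled (S : Finset (WreathZ G)) :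
    ∃ (A : Finset G) (R c : ℕ), A.Nonempty ∧ ∀ w ∈ S, IsControlled A R c w := by
  classical
  have values_finite : (⋃ w ∈ S, Set.range w.left.1).Finite :=
    S.finite_toSet.biUnion fun w _ =>
      ((w.left.2.image w.left.1).insert 1).subset
        (Function.range_subset_insert_image_mulSupport _)
  have support_finite : (⋃ w ∈ S, Function.mulSupport w.left.1).Finite :=
    S.finite_toSet.biUnion fun w _ => w.left.2
  let A := insert 1 values_finite.toFinset
  let R := support_finite.toFinset.sup Int.natAbs
  let c := S.sup fun w => w.right.toAdd.natAbs
  refine ⟨A, R, c, Finset.insert_nonempty _ _, fun w hw => ⟨fun z => ?_, fun z hz => ?_, ?_⟩⟩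
  · exact Finset.mem_insert_of_mem <| values_finite.mem_toFinset.2 <|
      Set.mem_biUnion hw (Set.mem_range_self z)
  · by_contra ne_one
    have natAbs_le : z.natAbs ≤ R := Finset.le_sup (f := Int.natAbs) <|
      support_finite.mem_toFinset.2 <| Set.mem_biUnion hw ne_one
    rw [Finset.mem_Icc] at hz
    omega
  · have natAbs_le : w.right.toAdd.natAbs ≤ c :=
      Finset.le_sup (f := fun w : WreathZ G => w.right.toAdd.natAbs) hw
    rw [Int.abs_eq_natAbs]
    exact_mod_cast natAbs_le

theorem abs_randomPullback_sample_sub_le {n : ℕ} {f : (Fin n → WreathZ G) → ℝ} {C : ℝ}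
    (hf : ∀ w, |f w| ≤ C) (hf_inv : IsTranslationInvariant f) {A : Finset G} [Nonempty A]
    {R c : ℕ} {w : Fin n → WreathZ G} (hw : ∀ i, IsControlled A R c (w i)) (K M N : ℕ) :
    |randomPullback (fun x y =>
          y * sample (I := window K N R) (N := N) (lamp A (M := M)) x) n f w -
        randomPullback (fun x y =>
          y * sample (I := window K N R) (N := N) (lamp A (M := M)) x) n f 1| ≤
      n * ((K * (2 * R + 1) + c : ℕ) * (2 * C / (N + 1))) +
        ((n * (2 * R + 1) : ℕ) * (2 * C / (M + 1)) +
          √(A.card ^ (n * (2 * R + 1)) / (K + 1) * C ^ 2)) := by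
  let shifted (k : Fin (K + 1)) (i : Fin n) : WreathZ G :=
    inl (shiftHom G (Multiplicative.ofAdd ((k : ℕ) * (2 * R + 1) : ℤ)) (w i).left)
  let mean (u : Fin n → WreathZ G) : ℝ := 𝔼 j : Fin n → Fin (N + 1),
    𝔼 x : Fin n × window K N R → LampSpace A M,
      f (u * configuration (fun i => j i) (lamp A ∘ x))
  have displacement_le (k : Fin (K + 1)) (i : Fin n) :
      |((k : ℕ) * (2 * R + 1) : ℤ) + (w i).right.toAdd| ≤ (K * (2 * R + 1) + c : ℕ) := by
    refine (abs_add_le _ _).trans ?_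
    rw [abs_of_nonneg (by positivity)]
    push_cast
    gcongr
    · exact_mod_cast k.is_le
    · exact (hw i).abs_displacement_le
  have translate : |mean w - 𝔼 k, mean (shifted k)| ≤
      n * ((K * (2 * R + 1) + c : ℕ) * (2 * C / (N + 1))) := by
    rw [← Fintype.expect_const (ι := Fin (K + 1)) (mean w)]
    exact abs_expect_sub_expect_le fun k =>
      abs_expect_mul_configuration_sub_le (lamp A) N hf hf_inv w _ (displacement_le k)
  have absorb : |𝔼 k, mean (shifted k) - mean 1| ≤ (n * (2 * R + 1) : ℕ) * (2 * C / (M + 1)) +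
      √(A.card ^ (n * (2 * R + 1)) / (K + 1) * C ^ 2) := by
    rw [Finset.expect_comm]
    refine abs_expect_sub_expect_le fun j => ?_
    simpa only [Fintype.card_fin, one_mul] using
      abs_expect_expect_inl_mul_configuration_sub_le A K M N R hf
        (fun i => (hw i).lamp_mem) (fun i => (hw i).lamp_eq_one) j
  rw [randomPullback_sample, randomPullback_sample]
  exact (abs_sub_le _ _ _).trans (add_le_add translate absorb)

theorem exists_div_add_one_le (c : ℝ) {ε : ℝ} (hε : 0 < ε) : ∃ N : ℕ, c / (N + 1) ≤ ε := by
  obtain ⟨N, hN⟩ := exists_nat_ge (c / ε)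
  refine ⟨N, (div_le_iff₀ (by positivity)).2 ?_⟩
  rw [div_le_iff₀ hε] at hN
  linarith

theorem hasMixingTranslates (G : Type u) [Group G] : HasMixingTranslates (WreathZ G) := by
  intro n S C ε hε
  obtain ⟨A, R, c, hA, hS⟩ := exists_forall_isControlled S
  have values_nonempty : Nonempty A := hA.to_subtype
  obtain ⟨K, hK⟩ := exists_div_add_one_le (A.card ^ (n * (2 * R + 1)) * C ^ 2)
    (ε := (ε / 3) ^ 2) (by positivity)
  obtain ⟨M, hM⟩ := exists_div_add_one_le ((n * (2 * R + 1) : ℕ) * (2 * C))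
    (ε := ε / 3) (by positivity)
  obtain ⟨N, hN⟩ := exists_div_add_one_le (n * ((K * (2 * R + 1) + c : ℕ) * (2 * C)))
    (ε := ε / 3) (by positivity)
  refine ⟨Fin (N + 1) × (window K N R → LampSpace A M), inferInstance,
    inferInstance, sample (lamp A), fun f hf hf_inv w hw => ?_⟩
  refine (abs_randomPullback_sample_sub_le hf hf_inv (fun i => hS _ (hw i)) K M N).trans ?_
  have sqrt_le : √(A.card ^ (n * (2 * R + 1)) / (K + 1) * C ^ 2) ≤ ε / 3 := by
    rw [div_mul_eq_mul_div]
    exact Real.sqrt_le_iff.2 ⟨by positivity, hK⟩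
  rw [mul_div_assoc] at hM
  rw [mul_div_assoc, mul_div_assoc] at hN
  linarith

end Mixing

end WreathZ

end

/-- For any group `G`, the restricted wreath product `W = G ≀ ℤ` is
boundedly acyclic. -/
theorem wreathZ_boundedlyAcyclic (G : Type*) [Group G] :
    BoundedlyAcyclic (WreathZ G) :=
  (WreathZ.hasMixingTranslates G).boundedlyAcyclic
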